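/- arXiv:0710.5226 — 2 statements merged into one kernel-verified Lean document; each statement's English description precedes it below -/
import Mathlib

section
/- Reverse Hölder inequality for measurable functions: let (Ω, 𝒜, μ) be a measure space, let r, s ∈ ℝ \ {0} with r < 0 < s and 1 = 1/r + 1/s. Then for all measurable functions f, g : Ω → [0, ∞] one has ∫ f·g dμ ≥ (∫ f^r dμ)^{1/r} · (∫ g^s dμ)^{1/s}, where integrals are Lebesgue lower integrals with values in [0, ∞], powers are extended-nonnegative-real powers (so 0^{negative} = ∞, ∞^{negative} = 0), and ∞·0 = 0. (Corollary 3.) -/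
open MeasureTheory

/-!
The identity `g ^ s = (f * g) ^ s * (f ^ r) ^ (1 - s)` holds wherever `f ≠ 0` and `f * g ≠ ∞`, hence
almost everywhere unless `∫ f ^ r = ∞` or `∫ f * g = ∞`, when the claim is trivial. So reverse
Hölder is the usual Hölder inequality with weights `s` and `1 - s`, applied to `f * g` and `f ^ r`
and then solved for `∫ f * g`. A lower integral is attained on a measurable minorant, and `g`
enters both sides monotonically, so an arbitrary `g` reduces to a measurable one.
-/

section ConjugateExponents

variable {r s : ℝ}

lemma mem_Ioo_zero_one_of_one_div_add_one_div (hr : r < 0) (hrs : 1 = 1 / r + 1 / s) :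
    s ∈ Set.Ioo 0 1 := by
  have hr_inv : 1 / r < 0 := one_div_neg.mpr hr
  have hs_inv : 1 < 1 / s := by linarith
  have hs : 0 < s := one_div_pos.mp (one_pos.trans hs_inv)
  exact ⟨hs, (one_lt_div hs).mp hs_inv⟩

lemma mul_one_sub_eq_neg_of_one_div_add_one_div (hr : r ≠ 0) (hs : s ≠ 0)
    (hrs : 1 = 1 / r + 1 / s) : r * (1 - s) = -s := by
  field_simp at hrs
  linarith

end ConjugateExponents

lemma ennreal_rpow_eq_mul_rpow_mul_rpow_neg {a b : ENNReal} {s : ℝ} (hs : 0 ≤ s)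
    (ha : a ≠ 0) (hab : a * b ≠ ⊤) : b ^ s = (a * b) ^ s * a ^ (-s) := by
  rcases eq_or_ne a ⊤ with rfl | ha_top
  · obtain rfl : b = 0 := by
      by_contra hb
      exact hab (ENNReal.top_mul hb)
    rcases hs.eq_or_lt with rfl | hs_pos
    · simp
    · simp [hs_pos]
  · have ha_rpow : a ^ s ≠ 0 := (ENNReal.rpow_pos (pos_iff_ne_zero.mpr ha) ha_top).ne'
    rw [ENNReal.mul_rpow_of_nonneg _ _ hs, mul_right_comm, ENNReal.rpow_neg,
      ENNReal.mul_inv_cancel ha_rpow (ENNReal.rpow_ne_top_of_nonneg hs ha_top), one_mul]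

lemma ennreal_rpow_one_div_mul_rpow_one_div_le {A B C : ENNReal} {r s : ℝ} (hs : 0 < s)
    (hrs : 1 = 1 / r + 1 / s) (h : B ≤ C ^ s * A ^ (1 - s)) :
    A ^ (1 / r) * B ^ (1 / s) ≤ C := by
  have hexp : (1 - s) * (1 / s) = -(1 / r) := by
    linarith [mul_one_div_cancel hs.ne']
  calc A ^ (1 / r) * B ^ (1 / s)
      ≤ A ^ (1 / r) * (C ^ s * A ^ (1 - s)) ^ (1 / s) := by gcongr
    _ = C * (A ^ (1 / r) * (A ^ (1 / r))⁻¹) := by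
      rw [ENNReal.mul_rpow_of_nonneg _ _ (one_div_pos.mpr hs).le, ← ENNReal.rpow_mul,
        ← ENNReal.rpow_mul, hexp, mul_one_div_cancel hs.ne', ENNReal.rpow_one,
        ENNReal.rpow_neg, mul_left_comm]
    _ ≤ C := mul_le_of_le_one_right' (ENNReal.mul_inv_le_one _)

lemma exists_measurable_le_lintegral_rpow_eq {Ω : Type*} [MeasurableSpace Ω] (μ : Measure Ω)
    {s : ℝ} (hs : 0 < s) (g : Ω → ENNReal) :
    ∃ h : Ω → ENNReal, Measurable h ∧ h ≤ g ∧ ∫⁻ ω, g ω ^ s ∂μ = ∫⁻ ω, h ω ^ s ∂μ := by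
  obtain ⟨k, hk, hk_le, hk_eq⟩ := exists_measurable_le_lintegral_eq μ (fun ω ↦ g ω ^ s)
  refine ⟨fun ω ↦ k ω ^ s⁻¹, hk.pow_const s⁻¹, fun ω ↦ ?_, ?_⟩
  · exact (ENNReal.rpow_inv_le_iff hs).mpr (hk_le ω)
  · simp only [hk_eq, ENNReal.rpow_inv_rpow hs.ne']

section ReverseHolder

variable {Ω : Type*} [MeasurableSpace Ω] {μ : Measure Ω} {r s : ℝ} {f g : Ω → ENNReal}

lemma lintegral_rpow_le_lintegral_mul_rpow_mul_lintegral_rpow (hr : r < 0)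
    (hrs : 1 = 1 / r + 1 / s) (hf : AEMeasurable f μ) (hg : AEMeasurable g μ)
    (hfr_top : ∫⁻ ω, f ω ^ r ∂μ ≠ ⊤) (hfg_top : ∫⁻ ω, f ω * g ω ∂μ ≠ ⊤) :
    ∫⁻ ω, g ω ^ s ∂μ ≤ (∫⁻ ω, f ω * g ω ∂μ) ^ s * (∫⁻ ω, f ω ^ r ∂μ) ^ (1 - s) := by
  obtain ⟨hs_pos, hs_lt_one⟩ := mem_Ioo_zero_one_of_one_div_add_one_div hr hrs
  have hfr : AEMeasurable (fun ω ↦ f ω ^ r) μ := hf.pow_const r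
  have hfg : AEMeasurable (fun ω ↦ f ω * g ω) μ := hf.mul hg
  have hfactor : ∀ᵐ ω ∂μ, g ω ^ s = (f ω * g ω) ^ s * (f ω ^ r) ^ (1 - s) := by
    filter_upwards [ae_lt_top' hfr hfr_top, ae_lt_top' hfg hfg_top] with ω hfr_lt hfg_lt
    have hf_ne_zero : f ω ≠ 0 := by
      intro hf_zero
      simp [hf_zero, ENNReal.zero_rpow_of_neg hr] at hfr_lt
    rw [← ENNReal.rpow_mul, mul_one_sub_eq_neg_of_one_div_add_one_div hr.ne hs_pos.ne' hrs]
    exact ennreal_rpow_eq_mul_rpow_mul_rpow_neg hs_pos.le hf_ne_zero hfg_lt.ne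
  rw [lintegral_congr_ae hfactor]
  exact ENNReal.lintegral_mul_norm_pow_le hfg hfr hs_pos.le (sub_nonneg.mpr hs_lt_one.le)
    (add_sub_cancel s 1)

lemma lintegral_rpow_mul_lintegral_rpow_le_lintegral_mul (hr : r < 0)
    (hrs : 1 = 1 / r + 1 / s) (hf : AEMeasurable f μ) (hg : AEMeasurable g μ) :
    (∫⁻ ω, f ω ^ r ∂μ) ^ (1 / r) * (∫⁻ ω, g ω ^ s ∂μ) ^ (1 / s) ≤ ∫⁻ ω, f ω * g ω ∂μ := by
  rcases eq_or_ne (∫⁻ ω, f ω ^ r ∂μ) ⊤ with hfr_top | hfr_top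
  · simp [hfr_top, ENNReal.top_rpow_of_neg (inv_lt_zero.mpr hr)]
  rcases eq_or_ne (∫⁻ ω, f ω * g ω ∂μ) ⊤ with hfg_top | hfg_top
  · simp [hfg_top]
  exact ennreal_rpow_one_div_mul_rpow_one_div_le
    (mem_Ioo_zero_one_of_one_div_add_one_div hr hrs).1 hrs
    (lintegral_rpow_le_lintegral_mul_rpow_mul_lintegral_rpow hr hrs hf hg hfr_top hfg_top)

theorem stmt17_general (hr : r < 0) (hrs : 1 = 1 / r + 1 / s) (hf : AEMeasurable f μ) :
    (∫⁻ ω, f ω ^ r ∂μ) ^ (1 / r) * (∫⁻ ω, g ω ^ s ∂μ) ^ (1 / s) ≤ ∫⁻ ω, f ω * g ω ∂μ := by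
  have hs : 0 < s := (mem_Ioo_zero_one_of_one_div_add_one_div hr hrs).1
  obtain ⟨h, h_meas, h_le, h_eq⟩ := exists_measurable_le_lintegral_rpow_eq μ hs g
  calc (∫⁻ ω, f ω ^ r ∂μ) ^ (1 / r) * (∫⁻ ω, g ω ^ s ∂μ) ^ (1 / s)
      = (∫⁻ ω, f ω ^ r ∂μ) ^ (1 / r) * (∫⁻ ω, h ω ^ s ∂μ) ^ (1 / s) := by rw [h_eq]
    _ ≤ ∫⁻ ω, f ω * h ω ∂μ :=
      lintegral_rpow_mul_lintegral_rpow_le_lintegral_mul hr hrs hf h_meas.aemeasurable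
    _ ≤ ∫⁻ ω, f ω * g ω ∂μ := by
      gcongr with ω
      exact h_le ω

end ReverseHolder

/-- Corollary 3 (reverse Hölder inequality): for `r < 0 < s` with
`1 = 1/r + 1/s` and measurable `f, g : Ω → [0,∞]`,
`∫ f·g dμ ≥ (∫ f^r dμ)^{1/r} · (∫ g^s dμ)^{1/s}` (with the `ℝ≥0∞` conventions
`0^p = ∞`, `∞^p = 0` for `p < 0`, and `∞·0 = 0`). -/
theorem stmt17 {Ω : Type*} [MeasurableSpace Ω] (μ : Measure Ω)
    (r s : ℝ) (hr : r < 0) (hs : 0 < s) (hrs : 1 = 1 / r + 1 / s)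
    (f g : Ω → ENNReal) (hf : Measurable f) (hg : Measurable g) :
    (∫⁻ ω, f ω ^ r ∂μ) ^ (1 / r) * (∫⁻ ω, g ω ^ s ∂μ) ^ (1 / s) ≤
      ∫⁻ ω, f ω * g ω ∂μ :=
  stmt17_general hr hrs hf.aemeasurable
end

section
/- Generalized Hölder inequality for measurable functions, second direction: let (Ω, 𝒜, μ) be a measure space, let r, s, t ∈ ℝ with r·s·t ≠ 0 and 1/t = 1/r + 1/s, and suppose t > r and t > s. Then for all measurable functions f, g : Ω → [0, ∞] one has (∫ (f·g)^t dμ)^{1/t} ≥ (∫ f^r dμ)^{1/r} · (∫ g^s dμ)^{1/s}, where integrals are Lebesgue lower integrals with values in [0, ∞] and powers are extended-nonnegative-real powers (so 0^{negative} = ∞, ∞^{negative} = 0, ∞·0 = 0). (Theorem 3, second implication.) -/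
open MeasureTheory

/-
Write `‖f‖ p` for `(∫ f ^ p) ^ (1 / p)`. For every exponent `‖f⁻¹‖ p = (‖f‖ (-p))⁻¹`, so negative
exponents are handled by inverting functions in Hölder's inequality. The hypotheses leave two
configurations up to swapping `f` and `g`: if `r, s, t < 0`, apply Hölder to `f⁻¹ * g⁻¹`;
if `t > 0 > s`, apply it to `f = (f * g) * g⁻¹`. The identities `(f * g)⁻¹ = f⁻¹ * g⁻¹` and
`f = (f * g) * g⁻¹` can fail where a function is `0` or `∞`, but that happens on a non-null set
only if the claimed inequality is trivial.
-/

open scoped ENNReal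

theorem le_mul_mul_inv_of_ne_zero_of_mul_ne_top {a b : ℝ≥0∞} (hb : b ≠ 0) (hab : a * b ≠ ∞) :
    a ≤ a * b * b⁻¹ := by
  rcases eq_or_ne b ∞ with rfl | hb_top
  · have ha : a = 0 := by_contra fun ha ↦ hab (ENNReal.mul_top ha)
    simp only [ha, zero_le]
  · rw [ENNReal.mul_inv_cancel_right hb hb_top]

section eLpNorm'

variable {α : Type*} [MeasurableSpace α] {μ : Measure α} {f g : α → ℝ≥0∞} {p q r : ℝ}

theorem eLpNorm'_inv (f : α → ℝ≥0∞) (p : ℝ) (μ : Measure α) :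
    eLpNorm' f⁻¹ p μ = (eLpNorm' f (-p) μ)⁻¹ := by
  simp only [eLpNorm', enorm_eq_self, Pi.inv_apply, ENNReal.inv_rpow, ENNReal.rpow_neg,
    one_div_neg_eq_neg_one_div, inv_inv]

theorem ae_ne_top_of_eLpNorm'_ne_top (hp : 0 < p) (hf : AEMeasurable f μ)
    (h : eLpNorm' f p μ ≠ ∞) : ∀ᵐ x ∂μ, f x ≠ ∞ := by
  have h_int : ∫⁻ x, f x ^ p ∂μ < ∞ :=
    lintegral_rpow_enorm_lt_top_of_eLpNorm'_lt_top hp h.lt_top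
  filter_upwards [ae_lt_top' (hf.pow_const p) h_int.ne] with x hx
  exact (ENNReal.rpow_lt_top_iff_of_pos hp).1 hx |>.ne

theorem ae_ne_zero_of_eLpNorm'_neg_ne_zero (hp : 0 < p) (hf : AEMeasurable f μ)
    (h : eLpNorm' f (-p) μ ≠ 0) : ∀ᵐ x ∂μ, f x ≠ 0 := by
  have h_inv : eLpNorm' f⁻¹ p μ ≠ ∞ := by rwa [eLpNorm'_inv, ENNReal.inv_ne_top]
  filter_upwards [ae_ne_top_of_eLpNorm'_ne_top hp hf.inv h_inv] with x hx
  exact ENNReal.inv_ne_top.1 hx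

theorem eLpNorm'_mul_le (h : p.HolderTriple q r) (hf : AEMeasurable f μ) (hg : AEMeasurable g μ) :
    eLpNorm' (f * g) r μ ≤ eLpNorm' f p μ * eLpNorm' g q μ :=
  ENNReal.lintegral_Lp_mul_le_Lq_mul_Lr h.pos' h.lt h.one_div_eq μ hf hg

theorem eLpNorm'_mul_eLpNorm'_neg_le (h : p.HolderTriple q r) (hf : AEMeasurable f μ)
    (hg : AEMeasurable g μ) :
    eLpNorm' f r μ * eLpNorm' g (-q) μ ≤ eLpNorm' (f * g) p μ := by
  rcases eq_or_ne (eLpNorm' g (-q) μ) 0 with hg_zero | hg_zero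
  · simp only [hg_zero, mul_zero, zero_le]
  rcases eq_or_ne (eLpNorm' (f * g) p μ) ∞ with hfg_top | hfg_top
  · simp only [hfg_top, le_top]
  have h_le : ∀ᵐ x ∂μ, ‖f x‖ₑ ≤ ‖(f * g * g⁻¹) x‖ₑ := by
    filter_upwards [ae_ne_zero_of_eLpNorm'_neg_ne_zero h.symm.pos hg hg_zero,
      ae_ne_top_of_eLpNorm'_ne_top h.pos (hf.mul hg) hfg_top] with x hgx hfgx
    exact le_mul_mul_inv_of_ne_zero_of_mul_ne_top hgx hfgx
  have h_div : eLpNorm' f r μ ≤ eLpNorm' (f * g) p μ / eLpNorm' g (-q) μ :=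
    calc eLpNorm' f r μ
      _ ≤ eLpNorm' (f * g * g⁻¹) r μ := eLpNorm'_mono_enorm_ae h.nonneg' h_le
      _ ≤ eLpNorm' (f * g) p μ * eLpNorm' g⁻¹ q μ := eLpNorm'_mul_le h (hf.mul hg) hg.inv
      _ = eLpNorm' (f * g) p μ / eLpNorm' g (-q) μ := by rw [eLpNorm'_inv, div_eq_mul_inv]
  exact ENNReal.mul_le_of_le_div h_div

theorem eLpNorm'_neg_mul_eLpNorm'_neg_le (h : p.HolderTriple q r) (hf : AEMeasurable f μ)
    (hg : AEMeasurable g μ) :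
    eLpNorm' f (-p) μ * eLpNorm' g (-q) μ ≤ eLpNorm' (f * g) (-r) μ := by
  rcases eq_or_ne (eLpNorm' f (-p) μ) 0 with hf_zero | hf_zero
  · simp only [hf_zero, zero_mul, zero_le]
  rcases eq_or_ne (eLpNorm' g (-q) μ) 0 with hg_zero | hg_zero
  · simp only [hg_zero, mul_zero, zero_le]
  have h_inv : (f * g)⁻¹ =ᵐ[μ] f⁻¹ * g⁻¹ := by
    filter_upwards [ae_ne_zero_of_eLpNorm'_neg_ne_zero h.pos hf hf_zero,
      ae_ne_zero_of_eLpNorm'_neg_ne_zero h.symm.pos hg hg_zero] with x hfx hgx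
    exact ENNReal.mul_inv (.inl hfx) (.inr hgx)
  rw [← ENNReal.inv_le_inv]
  calc (eLpNorm' (f * g) (-r) μ)⁻¹
    _ = eLpNorm' (f⁻¹ * g⁻¹) r μ := by rw [← eLpNorm'_inv, eLpNorm'_congr_ae h_inv]
    _ ≤ eLpNorm' f⁻¹ p μ * eLpNorm' g⁻¹ q μ := eLpNorm'_mul_le h hf.inv hg.inv
    _ = (eLpNorm' f (-p) μ * eLpNorm' g (-q) μ)⁻¹ := by
      rw [eLpNorm'_inv, eLpNorm'_inv, ENNReal.mul_inv (.inl hf_zero) (.inr hg_zero)]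

end eLpNorm'

theorem holderTriple_cases_of_lt {r s t : ℝ} (h : t⁻¹ = r⁻¹ + s⁻¹) (hrt : r < t) (hst : s < t) :
    (-r).HolderTriple (-s) (-t) ∨ t.HolderTriple (-s) r ∨ t.HolderTriple (-r) s := by
  rcases lt_trichotomy t 0 with ht | rfl | ht
  · refine .inl ⟨?_, neg_pos.2 (hrt.trans ht), neg_pos.2 (hst.trans ht)⟩
    simp only [inv_neg, h, neg_add]
  · linarith [inv_lt_zero.2 hrt, inv_lt_zero.2 hst, inv_zero (G₀ := ℝ)]
  rcases lt_trichotomy s 0 with hs | rfl | hs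
  · refine .inr (.inl ⟨?_, ht, neg_pos.2 hs⟩)
    rw [inv_neg, h, add_neg_cancel_right]
  · rw [inv_zero, add_zero] at h
    exact absurd (inv_injective h) hrt.ne'
  · have hr : r⁻¹ < 0 := by linarith [inv_strictAnti₀ hs hst]
    refine .inr (.inr ⟨?_, ht, neg_pos.2 (inv_lt_zero.1 hr)⟩)
    rw [inv_neg, h, add_neg_cancel_comm]

/-- Theorem 3, second implication (generalized Hölder inequality for measurable
functions): if `r·s·t ≠ 0`, `1/t = 1/r + 1/s` and `t > r`, `t > s`, then for
measurable `f, g : Ω → [0,∞]`,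
`(∫ (f·g)^t dμ)^{1/t} ≥ (∫ f^r dμ)^{1/r} · (∫ g^s dμ)^{1/s}`. -/
theorem stmt19 {Ω : Type*} [MeasurableSpace Ω] (μ : Measure Ω)
    (r s t : ℝ) (h0 : r * s * t ≠ 0) (h : 1 / t = 1 / r + 1 / s)
    (hrt : r < t) (hst : s < t)
    (f g : Ω → ENNReal) (hf : Measurable f) (hg : Measurable g) :
    (∫⁻ ω, f ω ^ r ∂μ) ^ (1 / r) * (∫⁻ ω, g ω ^ s ∂μ) ^ (1 / s) ≤
      (∫⁻ ω, (f ω * g ω) ^ t ∂μ) ^ (1 / t) := by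
  change eLpNorm' f r μ * eLpNorm' g s μ ≤ eLpNorm' (f * g) t μ
  rw [one_div, one_div, one_div] at h
  rcases holderTriple_cases_of_lt h hrt hst with h_neg | h_pos | h_pos
  · simpa only [neg_neg] using
      eLpNorm'_neg_mul_eLpNorm'_neg_le h_neg hf.aemeasurable hg.aemeasurable
  · simpa only [neg_neg] using
      eLpNorm'_mul_eLpNorm'_neg_le h_pos hf.aemeasurable hg.aemeasurable
  · rw [mul_comm, mul_comm f]
    simpa only [neg_neg] using
      eLpNorm'_mul_eLpNorm'_neg_le h_pos hg.aemeasurable hf.aemeasurable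
end
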